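/- Fix finite nonempty types S and A, a transition kernel F : S → A → S → ℝ with F s a s' ≥ 0 and ∑_{s'} F s a s' = 1; a perturbation prior p : S → S → ℝ with p s s̃ > 0 and ∑_{s̃} p s s̃ = 1; a policy π : S → A → ℝ with π s̃ a ≥ 0 and ∑_a π s̃ a = 1; a reward r : S → A → ℝ; γ with 0 ≤ γ < 1; α_attk > 0; α_ent ∈ ℝ; and f : ℝ → ℝ convex with f 1 = 0. Define H(s̃) = −∑_a π s̃ a * Real.log (π s̃ a); the adversary reward c(s, s̃) = ∑_a π s̃ a * (−r s a); the policy-averaged transition G(s, s̃, s') = ∑_a π s̃ a * F s a s'; the soft-best functional M_s(u) = ⨆ over probability vectors ν on S of ( ∑_{s̃} ν s̃ * u s̃ − α_attk * ∑_{s̃} p s s̃ * f (ν s̃ / p s s̃) ); and the adversary operator (T_adv Q)(s, s̃) = c(s, s̃) + γ * ∑_{s'} G(s, s̃, s') * M_{s'}( fun s̃' => Q s' s̃' − α_ent * H(s̃') ) for Q : S → S → ℝ. Then T_adv is a γ-contraction in sup norm: for all Q₁, Q₂ : S → S → ℝ, max_{(s,s̃)} |(T_adv Q₁)(s,s̃)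 − (T_adv Q₂)(s,s̃)| ≤ γ * max_{(s,s̃)} |Q₁(s,s̃) − Q₂(s,s̃)|. -/

import Mathlib

/-- Contraction conclusion of the paper's Theorem 3.3: the soft-optimal
adversary's Bellman operator is a γ-contraction in sup norm. -/
theorem valt_adversary_bellman_contraction
    {S A : Type*} [Fintype S] [Nonempty S] [Fintype A] [Nonempty A]
    (F : S → A → S → ℝ) (hF0 : ∀ s a s', 0 ≤ F s a s')
    (hF1 : ∀ s a, ∑ s', F s a s' = 1)
    (p : S → S → ℝ) (hp0 : ∀ s t, 0 < p s t) (hp1 : ∀ s, ∑ t, p s t = 1)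
    (π : S → A → ℝ) (hπ0 : ∀ t a, 0 ≤ π t a) (hπ1 : ∀ t, ∑ a, π t a = 1)
    (r : S → A → ℝ) (γ : ℝ) (hγ0 : 0 ≤ γ) (hγ1 : γ < 1)
    (αattk αent : ℝ) (hαattk : 0 < αattk)
    (f : ℝ → ℝ) (hf : ConvexOn ℝ Set.univ f) (hf1 : f 1 = 0)
    (H : S → ℝ) (hH : ∀ t, H t = -∑ a, π t a * Real.log (π t a))
    (c : S → S → ℝ) (hc : ∀ s t, c s t = ∑ a, π t a * (-r s a))
    (G : S → S → S → ℝ) (hG : ∀ s t s', G s t s' = ∑ a, π t a * F s a s')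
    (M : S → (S → ℝ) → ℝ)
    (hM : ∀ s u, M s u =
      ⨆ ν : {w : S → ℝ // (∀ t, 0 ≤ w t) ∧ ∑ t, w t = 1},
        ((∑ t, ν.1 t * u t) - αattk * ∑ t, p s t * f (ν.1 t / p s t)))
    (Tadv : (S → S → ℝ) → S → S → ℝ)
    (hTadv : ∀ Q s t, Tadv Q s t = c s t + γ * ∑ s', G s t s' *
      M s' (fun t' => Q s' t' - αent * H t'))
    (Q₁ Q₂ : S → S → ℝ) :
    Finset.univ.sup' Finset.univ_nonempty
        (fun st : S × S => |Tadv Q₁ st.1 st.2 - Tadv Q₂ st.1 st.2|) ≤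
      γ * Finset.univ.sup' Finset.univ_nonempty
        (fun st : S × S => |Q₁ st.1 st.2 - Q₂ st.1 st.2|) := by
  set D : ℝ := Finset.univ.sup' Finset.univ_nonempty
        (fun st : S × S => |Q₁ st.1 st.2 - Q₂ st.1 st.2|) with hD
  have hle : ∀ s t, |Q₁ s t - Q₂ s t| ≤ D := fun s t =>
    Finset.le_sup' (fun st : S × S => |Q₁ st.1 st.2 - Q₂ st.1 st.2|) (Finset.mem_univ (s, t))
  have hne : ∀ s : S, Nonempty {w : S → ℝ // (∀ t, 0 ≤ w t) ∧ ∑ t, w t = 1} := fun s =>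
    ⟨⟨p s, fun t => (hp0 s t).le, hp1 s⟩⟩
  -- the divergence is nonnegative by Jensen
  have hJ : ∀ s (ν : {w : S → ℝ // (∀ t, 0 ≤ w t) ∧ ∑ t, w t = 1}),
      0 ≤ ∑ t, p s t * f (ν.1 t / p s t) := by
    intro s ν
    have h := hf.map_sum_le (t := Finset.univ) (w := p s) (p := fun t => ν.1 t / p s t)
      (fun t _ => (hp0 s t).le) (hp1 s) (fun t _ => Set.mem_univ _)
    have h2 : ∑ t, p s t • (ν.1 t / p s t) = 1 := by
      refine Eq.trans ?_ ν.2.2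
      refine Finset.sum_congr rfl fun t _ => ?_
      rw [smul_eq_mul, mul_div_cancel₀ _ (hp0 s t).ne']
    rw [h2, hf1] at h
    simpa [smul_eq_mul] using h
  have hbdd : ∀ s (u : S → ℝ), BddAbove (Set.range
      fun ν : {w : S → ℝ // (∀ t, 0 ≤ w t) ∧ ∑ t, w t = 1} =>
        ((∑ t, ν.1 t * u t) - αattk * ∑ t, p s t * f (ν.1 t / p s t))) := by
    intro s u
    refine ⟨∑ t, |u t|, ?_⟩
    rintro _ ⟨ν, rfl⟩
    have h1 : ∑ t, ν.1 t * u t ≤ ∑ t, |u t| := by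
      refine Finset.sum_le_sum fun t _ => ?_
      have h3 : ν.1 t ≤ 1 := by
        refine le_trans ?_ ν.2.2.le
        exact Finset.single_le_sum (f := ν.1) (fun i _ => ν.2.1 i) (Finset.mem_univ t)
      calc ν.1 t * u t ≤ ν.1 t * |u t| := mul_le_mul_of_nonneg_left (le_abs_self _) (ν.2.1 t)
        _ ≤ 1 * |u t| := mul_le_mul_of_nonneg_right h3 (abs_nonneg _)
        _ = |u t| := one_mul _
    have h2 := mul_nonneg hαattk.le (hJ s ν)
    show (∑ t, ν.1 t * u t) - αattk * ∑ t, p s t * f (ν.1 t / p s t) ≤ _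
    linarith
  have hMle : ∀ s (u v : S → ℝ), (∀ t, u t ≤ v t + D) → M s u ≤ M s v + D := by
    intro s u v huv
    rw [hM s u, hM s v]
    have := hne s
    refine ciSup_le fun ν => ?_
    have h1 := le_ciSup (hbdd s v) ν
    have h2 : ∑ t, ν.1 t * u t ≤ ∑ t, ν.1 t * v t + D := by
      calc ∑ t, ν.1 t * u t ≤ ∑ t, (ν.1 t * v t + ν.1 t * D) := by
            refine Finset.sum_le_sum fun t _ => ?_
            rw [← mul_add]
            exact mul_le_mul_of_nonneg_left (huv t) (ν.2.1 t)
        _ = _ := by rw [Finset.sum_add_distrib, ← Finset.sum_mul, ν.2.2, one_mul]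
    linarith
  have hG0 : ∀ s t s', 0 ≤ G s t s' := by
    intro s t s'
    rw [hG]
    exact Finset.sum_nonneg fun a _ => mul_nonneg (hπ0 t a) (hF0 s a s')
  have hG1 : ∀ s t, ∑ s', G s t s' = 1 := by
    intro s t
    simp only [hG]
    rw [Finset.sum_comm]
    simp only [← Finset.mul_sum, hF1, mul_one, hπ1]
  refine Finset.sup'_le _ _ ?_
  rintro ⟨s, t⟩ -
  show |Tadv Q₁ s t - Tadv Q₂ s t| ≤ γ * D
  rw [hTadv, hTadv, add_sub_add_left_eq_sub, ← mul_sub, abs_mul, abs_of_nonneg hγ0,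
    ← Finset.sum_sub_distrib]
  refine mul_le_mul_of_nonneg_left ?_ hγ0
  refine (Finset.abs_sum_le_sum_abs _ _).trans ?_
  rw [← one_mul D, ← hG1 s t, Finset.sum_mul]
  refine Finset.sum_le_sum fun s' _ => ?_
  rw [← mul_sub, abs_mul, abs_of_nonneg (hG0 s t s')]
  refine mul_le_mul_of_nonneg_left ?_ (hG0 s t s')
  have ha := hMle s' (fun t' => Q₁ s' t' - αent * H t') (fun t' => Q₂ s' t' - αent * H t')
    (fun t' => by have := abs_le.1 (hle s' t'); linarith [this.2])
  have hb := hMle s' (fun t' => Q₂ s' t' - αent * H t') (fun t' => Q₁ s' t' - αent * H t')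
    (fun t' => by have := abs_le.1 (hle s' t'); linarith [this.1])
  rw [abs_le]
  constructor <;> linarith
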